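/- Let h(z) = ∑_{n≥0} aₙ zⁿ be an entire function. Then there exists a separable complex Hilbert space H, a compact quasinilpotent operator A on H, and vectors b, c ∈ H such that ⟪b, Aⁿ c⟫ = aₙ for all n ≥ 0. -/

import Mathlib

noncomputable section

open Filter Topology

abbrev L2 := lp (fun _ : ℕ => ℂ) 2

lemma exists_wshift (v : ℕ → ℂ) (C : ℝ) (hC : ∀ n, ‖v n‖ ≤ C) :
    ∃ T : L2 →L[ℂ] L2, ‖T‖ ≤ C ∧ (∀ x, (T x) 0 = 0) ∧ ∀ x n, (T x) (n+1) = v n * x n := by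
  have hC0 : 0 ≤ C := (norm_nonneg _).trans (hC 0)
  let g : (ℕ → ℂ) → ℕ → ℂ := fun x m => Nat.casesOn m 0 (fun n => v n * x n)
  have p2 : (0 : ℝ) < (2 : ENNReal).toReal := by norm_num
  have hs : ∀ x : L2, Summable fun n => ‖x n‖ ^ 2 := fun x => by
    simpa using (lp.memℓp x).summable p2
  have hle : ∀ (x : L2) n, ‖g x (n+1)‖ ^ 2 ≤ C ^ 2 * ‖x n‖ ^ 2 := fun x n => by
    simp only [g, norm_mul, mul_pow]
    gcongr
    exact hC n
  have hs1 : ∀ x : L2, Summable fun n => ‖g x (n+1)‖ ^ 2 := fun x =>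
    Summable.of_nonneg_of_le (fun n => by positivity) (hle x) ((hs x).mul_left _)
  have hs2 : ∀ x : L2, Summable fun n => ‖g x n‖ ^ 2 := fun x =>
    (summable_nat_add_iff 1).1 (hs1 x)
  have hm : ∀ x : L2, Memℓp (g x) 2 := fun x => memℓp_gen (by simpa using hs2 x)
  let T0 : L2 →ₗ[ℂ] L2 :=
    { toFun := fun x => ⟨g x, hm x⟩
      map_add' := fun x y => by
        ext m
        cases m with
        | zero => exact (add_zero (0:ℂ)).symm
        | succ n => exact mul_add (v n) (x n) (y n)
      map_smul' := fun r x => by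
        ext m
        cases m with
        | zero => simp [g]
        | succ n => simp [g]; ring }
  have hb : ∀ x, ‖T0 x‖ ≤ C * ‖x‖ := fun x => by
    apply lp.norm_le_of_tsum_le p2 (by positivity)
    have h1 := lp.norm_rpow_eq_tsum p2 x
    simp only [ENNReal.toReal_ofNat, Real.rpow_ofNat] at h1 ⊢
    rw [mul_pow, h1, ← tsum_mul_left]
    change ∑' i, ‖g x i‖ ^ 2 ≤ _
    rw [(hs2 x).tsum_eq_zero_add]
    have : ‖g x 0‖ ^ 2 = 0 := by simp [g]
    rw [this, zero_add]
    exact (hs1 x).tsum_le_tsum (hle x) ((hs x).mul_left _)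
  exact ⟨T0.mkContinuous C hb, T0.mkContinuous_norm_le hC0 hb, fun x => rfl, fun x n => rfl⟩

lemma rankOne_compact (f : L2 →L[ℂ] ℂ) (y : L2) : IsCompactOperator (f.smulRight y) := by
  have h : IsCompactOperator (id : ℂ → ℂ) :=
    ⟨Metric.closedBall 0 1, isCompact_closedBall _ _, Metric.closedBall_mem_nhds _ one_pos⟩
  have := (h.comp_clm f).clm_comp ((1 : ℂ →L[ℂ] ℂ).smulRight y)
  exact this

lemma wshift_compact (w : ℕ → ℂ) (hw : Tendsto w atTop (𝓝 0)) (A : L2 →L[ℂ] L2)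
    (h0 : ∀ x, (A x) 0 = 0) (h1 : ∀ x n, (A x) (n+1) = w n * x n) : IsCompactOperator A := by
  let S : ℕ → L2 →L[ℂ] L2 := fun N => ∑ i ∈ Finset.range N,
    (innerSL ℂ (lp.single 2 i (1:ℂ) : L2)).smulRight (lp.single 2 (i+1) (w i) : L2)
  have hS : ∀ N, IsCompactOperator (S N) := fun N =>
    (compactOperator (RingHom.id ℂ) L2 L2).sum_mem fun i _ => rankOne_compact _ _
  have hS0 : ∀ N x, S N x = ∑ i ∈ Finset.range N, x i • (lp.single 2 (i+1) (w i) : L2) := by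
    intro N x
    simp [S, lp.inner_single_left]
  refine isCompactOperator_of_tendsto (l := atTop) (F := S) ?_ (Eventually.of_forall hS)
  rw [Metric.tendsto_atTop]
  intro ε hε
  obtain ⟨N, hN⟩ := Metric.tendsto_atTop.1 hw (ε/2) (by positivity)
  refine ⟨N, fun n hn => ?_⟩
  obtain ⟨B, hB, hB0, hB1⟩ := exists_wshift (fun k => if k < n then 0 else w k) (ε/2) (by
    intro k
    split_ifs with hk
    · simp; positivity
    · simpa using (hN k (by omega)).le)
  have : A - S n = B := by
    ext x m
    rw [sub_apply, hS0, lp.coeFn_sub, Pi.sub_apply, lp.coeFn_sum,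
      Finset.sum_apply]
    simp only [lp.coeFn_smul, Pi.smul_apply, lp.single_apply, Pi.single_apply]
    cases m with
    | zero => simp [h0, hB0]
    | succ k =>
      rw [h1, hB1]
      by_cases hk : k < n
      · simp [hk, mul_comm]
      · simp [hk]
  rw [dist_comm, dist_eq_norm, this]
  linarith

lemma wshift_quasi (w : ℕ → ℂ) (A : L2 →L[ℂ] L2) (hA : IsCompactOperator A)
    (h0 : ∀ x, (A x) 0 = 0) (h1 : ∀ x n, (A x) (n+1) = w n * x n) : spectralRadius ℂ A = 0 := by
  simp only [spectralRadius, ENNReal.iSup_eq_zero]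
  intro μ hμ
  by_contra hne
  have hne' : μ ≠ 0 := by simpa using hne
  rw [← IsCompactOperator.hasEigenvalue_iff_mem_spectrum hA hne'] at hμ
  obtain ⟨x, hx⟩ := hμ.exists_hasEigenvector
  have hx1 : A x = μ • x := hx.apply_eq_smul
  apply hx.2
  ext m
  have key : ∀ m, (A x) m = μ * x m := fun m => by rw [hx1]; rfl
  induction m with
  | zero => have := key 0; rw [h0] at this; simpa [hne'] using this.symm
  | succ n ih =>
    have := key (n+1)
    rw [h1, ih] at this
    simpa [hne'] using this.symm

lemma wshift_pow (w : ℕ → ℂ) (A : L2 →L[ℂ] L2)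
    (h0 : ∀ x, (A x) 0 = 0) (h1 : ∀ x n, (A x) (n+1) = w n * x n) (n : ℕ) :
    (A ^ n) (lp.single 2 0 (1:ℂ) : L2) = lp.single 2 n (∏ i ∈ Finset.range n, w i) := by
  induction n with
  | zero => simp
  | succ n ih =>
    rw [pow_succ', ContinuousLinearMap.mul_apply, ih]
    ext m
    cases m with
    | zero => rw [h0]; simp [lp.single_apply, Pi.single_apply]
    | succ k =>
      rw [h1]
      simp only [lp.single_apply, Pi.single_apply, Finset.prod_range_succ]
      by_cases hk : k = n
      · simp [hk, mul_comm]
      · simp [hk]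

lemma exists_weights (a : ℕ → ℂ) (ha : ∀ z : ℂ, Summable fun n : ℕ => ‖a n * z ^ n‖) :
    ∃ w : ℕ → ℝ, (∀ n, 0 < w n) ∧ Tendsto w atTop (𝓝 0) ∧ Antitone w ∧
      ∀ n, 1 ≤ n → ‖a n‖ * 2 ^ n ≤ w n ^ n := by
  let s : ℕ → ℝ := fun n => ‖a n‖ ^ ((n : ℝ)⁻¹)
  have hs0 : ∀ n, 0 ≤ s n := fun n => by positivity
  have hs : ∀ ε > 0, ∃ N, ∀ n ≥ N, s n ≤ ε := by
    intro ε hε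
    have h := (ha ((ε : ℂ)⁻¹)).tendsto_atTop_zero
    obtain ⟨N, hN⟩ := eventually_atTop.1 (h.eventually (ge_mem_nhds one_pos))
    refine ⟨N + 1, fun n hn => ?_⟩
    have h2 := hN n (by omega)
    simp only [norm_mul, norm_pow, norm_inv, Complex.norm_real, Real.norm_eq_abs,
      abs_of_pos hε, inv_pow] at h2
    rw [← div_eq_mul_inv, div_le_one (by positivity)] at h2
    calc s n ≤ (ε ^ n) ^ ((n : ℝ)⁻¹) := Real.rpow_le_rpow (norm_nonneg _) h2 (by positivity)
      _ = ε := Real.pow_rpow_inv_natCast hε.le (by omega)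
  have hbdd : BddAbove (Set.range s) := by
    obtain ⟨N, hN⟩ := hs 1 one_pos
    refine (isBoundedUnder_of_eventually_le (f := atTop) (a := 1) ?_).bddAbove_range
    exact eventually_atTop.2 ⟨N, hN⟩
  have hbd : ∀ n, BddAbove (Set.range fun k => s (n + k)) := fun n =>
    hbdd.mono (by rintro _ ⟨k, rfl⟩; exact ⟨_, rfl⟩)
  let r : ℕ → ℝ := fun n => ⨆ k, s (n + k)
  have hsr : ∀ n, s n ≤ r n := fun n => le_ciSup (hbd n) 0
  have hr0 : ∀ n, 0 ≤ r n := fun n => (hs0 n).trans (hsr n)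
  have hra : Antitone r := antitone_nat_of_succ_le fun n => ciSup_le fun k => by
    have := le_ciSup (hbd n) (1 + k)
    simpa [add_assoc] using this
  have hrt : Tendsto r atTop (𝓝 0) := by
    rw [Metric.tendsto_atTop]
    intro ε hε
    obtain ⟨N, hN⟩ := hs (ε/2) (by positivity)
    refine ⟨N, fun n hn => ?_⟩
    have : r n ≤ ε/2 := ciSup_le fun k => hN _ (by omega)
    rw [Real.dist_eq, sub_zero, abs_of_nonneg (hr0 n)]
    linarith
  refine ⟨fun n => 2 * (r n + 1 / ((n : ℝ) + 1)), fun n => ?_, ?_, ?_, ?_⟩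
  · have := hr0 n; positivity
  · simpa using (hrt.add tendsto_one_div_add_atTop_nhds_zero_nat).const_mul 2
  · intro m n hmn
    have := hra hmn
    have h2 : 1 / ((n : ℝ) + 1) ≤ 1 / ((m : ℝ) + 1) := by gcongr
    simp only
    linarith
  · intro n hn
    have h3 : ‖a n‖ = s n ^ n := (Real.rpow_inv_natCast_pow (norm_nonneg _) (by omega)).symm
    rw [h3, ← mul_pow]
    have h4 : 0 ≤ 1 / ((n : ℝ) + 1) := by positivity
    have := hsr n
    have := hs0 n
    apply pow_le_pow_left₀ (by positivity)
    linarith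

end


/-- Any entire function `h(z) = ∑ aₙ zⁿ` has a realization `(A, b, c)` on a separable
complex Hilbert space (here the separable Hilbert space `ℓ²`), where `A` is a compact
quasinilpotent operator and `⟪b, Aⁿ c⟫ = aₙ` for all `n`. -/
theorem stmt5 (a : ℕ → ℂ) (ha : ∀ z : ℂ, Summable fun n : ℕ => ‖a n * z ^ n‖) :
    ∃ (A : lp (fun _ : ℕ => ℂ) 2 →L[ℂ] lp (fun _ : ℕ => ℂ) 2)
      (b c : lp (fun _ : ℕ => ℂ) 2),
        IsCompactOperator (⇑A) ∧ spectralRadius ℂ A = 0 ∧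
          ∀ n : ℕ, @inner ℂ (lp (fun _ : ℕ => ℂ) 2) _ b ((A ^ n) c) = a n := by
  obtain ⟨w, hw0, hwt, hwa, hw⟩ := exists_weights a ha
  obtain ⟨A, -, h0, h1⟩ := exists_wshift (fun n => (w n : ℂ)) (w 0) (fun n => by
    simpa [abs_of_pos (hw0 n)] using hwa (Nat.zero_le n))
  have hA : IsCompactOperator A := wshift_compact (fun n => (w n : ℂ))
    (by simpa [Function.comp_def] using (Complex.continuous_ofReal.tendsto 0).comp hwt) A h0 h1
  have hp0 : ∀ n, 0 < ∏ i ∈ Finset.range n, w i := fun n => Finset.prod_pos fun i _ => hw0 i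
  have hp : ∀ n, w n ^ n ≤ ∏ i ∈ Finset.range n, w i := fun n => by
    have := Finset.prod_le_prod (s := Finset.range n) (f := fun _ => w n) (g := w)
      (fun i _ => (hw0 n).le) (fun i hi => hwa (Finset.mem_range.1 hi).le)
    simpa using this
  let β : ℕ → ℂ := fun n => (starRingEnd ℂ) (a n / (∏ i ∈ Finset.range n, w i : ℝ))
  have hβ : ∀ n, 1 ≤ n → ‖β n‖ ≤ (1/2) ^ n := fun n hn => by
    have h2 := (hw n hn).trans (hp n)
    simp only [β, RCLike.norm_conj, norm_div, Complex.norm_real, Real.norm_eq_abs,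
      abs_of_pos (hp0 n)]
    rw [div_le_iff₀ (hp0 n), one_div, inv_pow, ← div_eq_inv_mul, le_div_iff₀ (by positivity)]
    exact h2
  have hm : Memℓp β 2 := by
    apply memℓp_gen
    simp only [ENNReal.toReal_ofNat, Real.rpow_ofNat]
    refine Summable.of_norm_bounded_eventually_nat (g := fun n => (1/4 : ℝ) ^ n)
      (summable_geometric_of_lt_one (by norm_num) (by norm_num)) ?_
    filter_upwards [Filter.eventually_ge_atTop 1] with n hn
    calc ‖‖β n‖ ^ 2‖ = ‖β n‖ ^ 2 := by simp
      _ ≤ ((1/2) ^ n) ^ 2 := by gcongr; exact hβ n hn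
      _ = (1/4) ^ n := by rw [← pow_mul, mul_comm, pow_mul]; norm_num
  refine ⟨A, ⟨β, hm⟩, lp.single 2 0 1, hA, wshift_quasi _ A hA h0 h1, fun n => ?_⟩
  rw [wshift_pow _ A h0 h1, lp.inner_single_right]
  have h5 : ((∏ i ∈ Finset.range n, w i : ℝ) : ℂ) ≠ 0 := by exact_mod_cast (hp0 n).ne'
  change inner ℂ (β n) _ = _
  rw [RCLike.inner_apply, ← Complex.ofReal_prod]
  simp only [β, Complex.conj_conj]
  field_simp
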